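/- For every k with 0 ≤ k ≤ p − 2, if c(k + 1 + h_k) < h_k (so that h_{k+1} = h_k − 1), then the shifted core sums satisfy the recurrence N_{k+1} = N_k − c(k+1). (Recurrence (4.25), case δ_k = 0.) -/

import Mathlib

/-- The shifted h-index of order `k`: the largest `m` with `1 ≤ m ≤ p - k` and
`c (k + m) ≥ m` (the Hirsch h-index of the tail sequence `c (k+1), …, c p`).
Taken as the `sup` of the (finite) set of such `m`, which equals its maximum
when the set is nonempty and is `0` otherwise. -/
def hIdx (p : ℕ) (c : ℕ → ℕ) (k : ℕ) : ℕ :=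
  ((Finset.Icc 1 (p - k)).filter (fun m => m ≤ c (k + m))).sup id

/-- The shifted core sum `N_k = Σ_{j=k+1}^{k+h_k} c j`. -/
def coreSum (p : ℕ) (c : ℕ → ℕ) (k : ℕ) : ℕ :=
  ∑ j ∈ Finset.Icc (k + 1) (k + hIdx p c k), c j

/-- The shifted e-index `e_k = √(N_k − h_k²)`. -/
noncomputable def eIdx (p : ℕ) (c : ℕ → ℕ) (k : ℕ) : ℝ :=
  Real.sqrt ((coreSum p c k : ℝ) - (hIdx p c k : ℝ) ^ 2)

/-!
Passing from `k` to `k + 1` lowers the h-index by at most one, and `c (k + 1 + h_k) < h_k` forces it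
to drop. The two cores then end at the same index `k + h_k`, so they differ only in `c (k + 1)`.
-/

section ShiftedHIndex

variable {p : ℕ} {c : ℕ → ℕ} {k m : ℕ}

lemma hIdx_le (p : ℕ) (c : ℕ → ℕ) (k : ℕ) : hIdx p c k ≤ p - k :=
  Finset.sup_le fun _ hm => (Finset.mem_Icc.mp (Finset.mem_filter.mp hm).1).2

lemma hIdx_le_apply (p : ℕ) (c : ℕ → ℕ) (k : ℕ) : hIdx p c k ≤ c (k + hIdx p c k) := by
  refine Finset.sup_induction (p := fun m => m ≤ c (k + m)) (Nat.zero_le _) ?_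
    fun _ hm => (Finset.mem_filter.mp hm).2
  intro a ha b hb
  rcases le_total a b with hab | hba
  · rwa [sup_eq_right.mpr hab]
  · rwa [sup_eq_left.mpr hba]

lemma le_hIdx (hmp : m ≤ p - k) (hm : m ≤ c (k + m)) : m ≤ hIdx p c k := by
  rcases Nat.eq_zero_or_pos m with rfl | hm_pos
  · exact Nat.zero_le _
  · exact Finset.le_sup (f := id)
      (Finset.mem_filter.mpr ⟨Finset.mem_Icc.mpr ⟨hm_pos, hmp⟩, hm⟩)

lemma hIdx_lt_of_apply_lt (hc : AntitoneOn c (Set.Icc (k + 1) p)) (hm : c (k + m) < m) :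
    hIdx p c k < m := by
  by_contra! hle
  have hbound := hIdx_le p c k
  have hanti : c (k + hIdx p c k) ≤ c (k + m) :=
    hc (Set.mem_Icc.mpr (by lia)) (Set.mem_Icc.mpr (by lia)) (by lia)
  exact absurd (hIdx_le_apply p c k) (by lia)

lemma hIdx_le_hIdx_succ_add_one (p : ℕ) (c : ℕ → ℕ) (k : ℕ) :
    hIdx p c k ≤ hIdx p c (k + 1) + 1 := by
  have hbound := hIdx_le p c k
  have happly := hIdx_le_apply p c k
  rcases h : hIdx p c k with _ | m
  · exact Nat.zero_le _
  · rw [h] at hbound happly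
    have hindex : k + 1 + m = k + (m + 1) := by ring
    exact Nat.succ_le_succ (le_hIdx (by lia) (by rw [hindex]; lia))

lemma hIdx_succ_add_one (hc : AntitoneOn c (Set.Icc (k + 2) p))
    (hlt : c (k + 1 + hIdx p c k) < hIdx p c k) : hIdx p c (k + 1) + 1 = hIdx p c k :=
  le_antisymm (hIdx_lt_of_apply_lt hc hlt) (hIdx_le_hIdx_succ_add_one p c k)

lemma coreSum_eq_add_coreSum_succ (h : hIdx p c (k + 1) + 1 = hIdx p c k) :
    coreSum p c k = c (k + 1) + coreSum p c (k + 1) := by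
  have hend : k + hIdx p c k = k + 1 + hIdx p c (k + 1) := by lia
  rw [coreSum, coreSum, hend, Finset.Icc_add_one_left_eq_Ioc (k + 1)]
  exact (Finset.add_sum_Ioc_eq_sum_Icc (Nat.le_add_right _ _)).symm

end ShiftedHIndex

theorem stmt_4 (p : ℕ) (hp : 1 ≤ p) (c : ℕ → ℕ)
    (hmono : ∀ i j, 1 ≤ i → i ≤ j → j ≤ p → c j ≤ c i)
    (hpos : ∀ j, 1 ≤ j → j ≤ p → 1 ≤ c j)
    (hzero : ∀ j, p < j → c j = 0)
    (k : ℕ) (hk : k + 2 ≤ p)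
    (hc : c (k + 1 + hIdx p c k) < hIdx p c k) :
    (coreSum p c (k + 1) : ℤ) = (coreSum p c k : ℤ) - c (k + 1) := by
  have htail : AntitoneOn c (Set.Icc (k + 2) p) := fun i hi j hj hij =>
    hmono i j (le_trans (by lia) hi.1) hij hj.2
  rw [coreSum_eq_add_coreSum_succ (hIdx_succ_add_one htail hc)]
  push_cast
  ring
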